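/- Let u : A → B be a morphism of noetherian rings, M a finitely generated A-module, N a finitely generated B-module which is flat as an A-module, and n a natural number. Consider M ⊗_A N as a B-module. If M satisfies Serre's condition (S_n) and for every P ∈ Spec(A) the fiber module N_P/PN_P satisfies (S_n) as a module over B_P/PB_P, then M ⊗_A N satisfies Serre's condition (S_n) as a B-module. -/

import Mathlib

noncomputable section

open TensorProduct

universe u v w





/-- The depth of the ideal `I` on the module `M`: the supremum of lengths of
`M`-regular sequences with entries in `I`. -/
noncomputable def idealDepth (A : Type u) [CommRing A] (I : Ideal A)
    (M : Type v) [AddCommGroup M] [Module A M] : ℕ∞ :=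
  sSup {n : ℕ∞ | ∃ rs : List A, (rs.length : ℕ∞) = n ∧ (∀ r ∈ rs, r ∈ I) ∧
    RingTheory.Sequence.IsRegular M rs}

/-- The depth of a module over a local ring. -/
noncomputable def localDepth (A : Type u) [CommRing A] [IsLocalRing A]
    (M : Type v) [AddCommGroup M] [Module A M] : ℕ∞ :=
  idealDepth A (IsLocalRing.maximalIdeal A) M

/-- The (Krull) dimension of a module, i.e. the Krull dimension of its support. -/
noncomputable def supportDim (A : Type u) [CommRing A]
    (M : Type v) [AddCommGroup M] [Module A M] : WithBot ℕ∞ :=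
  Order.krullDim (Module.support A M)

/-- `depth (M_P)` : the depth of the localization of `M` at a prime `P`,
over the local ring `A_P`. -/
noncomputable def depthAt (A : Type u) [CommRing A]
    (M : Type v) [AddCommGroup M] [Module A M] (P : PrimeSpectrum A) : ℕ∞ :=
  localDepth (Localization.AtPrime P.asIdeal) (LocalizedModule P.asIdeal.primeCompl M)

/-- `ht_M(P) = dim (M_P)` : the height of a prime `P` in the support of `M`,
i.e. the dimension of the localized module `M_P` over `A_P`. -/
noncomputable def heightAt (A : Type u) [CommRing A]
    (M : Type v) [AddCommGroup M] [Module A M] (P : PrimeSpectrum A) : WithBot ℕ∞ :=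
  supportDim (Localization.AtPrime P.asIdeal) (LocalizedModule P.asIdeal.primeCompl M)

/-- Serre's condition `(S_n)` for a module: for every `P` in the support,
`depth (M_P) ≥ min (n, ht_M(P))`. -/
def SerreCondS (A : Type u) [CommRing A] (n : ℕ)
    (M : Type v) [AddCommGroup M] [Module A M] : Prop :=
  ∀ P ∈ Module.support A M,
    min (n : WithBot ℕ∞) (heightAt A M P) ≤ (depthAt A M P : WithBot ℕ∞)

/-- The condition `(C_n)` for a module: for every `P` in the support,
`depth (M_P) ≥ min (n, ht_M(P)) - 1`, equivalently
`min (n, ht_M(P)) ≤ depth (M_P) + 1`. -/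
def CondC (A : Type u) [CommRing A] (n : ℕ)
    (M : Type v) [AddCommGroup M] [Module A M] : Prop :=
  ∀ P ∈ Module.support A M,
    min (n : WithBot ℕ∞) (heightAt A M P) ≤ (depthAt A M P : WithBot ℕ∞) + 1

/-- A module `M` is almost Cohen-Macaulay if `depth(P, M) = depth (M_P)` for every
`P` in the support of `M` (Kang's definition). -/
def IsAlmostCMModule (A : Type u) [CommRing A]
    (M : Type v) [AddCommGroup M] [Module A M] : Prop :=
  ∀ P ∈ Module.support A M, idealDepth A P.asIdeal M = depthAt A M P

/-- A module `M` is Cohen-Macaulay if `depth (M_P) = dim (M_P)` for every `P` in its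
support. -/
def IsCMModule (A : Type u) [CommRing A]
    (M : Type v) [AddCommGroup M] [Module A M] : Prop :=
  ∀ P ∈ Module.support A M, (depthAt A M P : WithBot ℕ∞) = heightAt A M P

/-- A ring is almost Cohen-Macaulay if it is an almost Cohen-Macaulay module over
itself. -/
abbrev IsAlmostCMRing (A : Type u) [CommRing A] : Prop := IsAlmostCMModule A A

/-- A ring is Cohen-Macaulay if it is a Cohen-Macaulay module over itself, i.e. all its
localizations at primes have depth equal to dimension. -/
abbrev IsCMRing (A : Type u) [CommRing A] : Prop := IsCMModule A A

/-- A ring satisfies `(C_n)` if it does so as a module over itself. -/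
abbrev RingCondC (A : Type u) [CommRing A] (n : ℕ) : Prop := CondC A n A

/-- A ring satisfies `(S_n)` if it does so as a module over itself. -/
abbrev RingSerreCondS (A : Type u) [CommRing A] (n : ℕ) : Prop := SerreCondS A n A






variable (A : Type u) [CommRing A] (B : Type u) [CommRing B] [Algebra A B]

/-- The image in `B` of the complement of a prime `P` of `A`, as a submonoid of `B`. -/
noncomputable def fiberSubmonoid (P : PrimeSpectrum A) : Submonoid B :=
  Submonoid.map (algebraMap A B) P.asIdeal.primeCompl

/-- `PB_P` : the extension of the prime `P` of `A` to the localization `B_P` of `B`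
at (the image of) the complement of `P`. -/
noncomputable def fiberIdeal (P : PrimeSpectrum A) :
    Ideal (Localization (fiberSubmonoid A B P)) :=
  Ideal.map ((algebraMap B (Localization (fiberSubmonoid A B P))).comp (algebraMap A B))
    P.asIdeal

/-- The fiber ring `B_P / P B_P` of `A → B` at a prime `P` of `A`. -/
noncomputable def fiberRing (P : PrimeSpectrum A) : Type u :=
  Localization (fiberSubmonoid A B P) ⧸ fiberIdeal A B P

noncomputable instance (P : PrimeSpectrum A) : CommRing (fiberRing A B P) :=
  inferInstanceAs (CommRing (Localization (fiberSubmonoid A B P) ⧸ fiberIdeal A B P))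

/-- The fiber module `N_P / P N_P` of a `B`-module `N` at a prime `P` of `A`. -/
noncomputable def fiberModule (P : PrimeSpectrum A)
    (N : Type u) [AddCommGroup N] [Module B N] : Type u :=
  LocalizedModule (fiberSubmonoid A B P) N ⧸
    (fiberIdeal A B P •
      (⊤ : Submodule (Localization (fiberSubmonoid A B P))
        (LocalizedModule (fiberSubmonoid A B P) N)))

noncomputable instance (P : PrimeSpectrum A) (N : Type u) [AddCommGroup N] [Module B N] :
    AddCommGroup (fiberModule A B P N) :=
  inferInstanceAs (AddCommGroup (LocalizedModule (fiberSubmonoid A B P) N ⧸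
    (fiberIdeal A B P •
      (⊤ : Submodule (Localization (fiberSubmonoid A B P))
        (LocalizedModule (fiberSubmonoid A B P) N)))))

/-- `N_P / P N_P` is a module over the fiber ring `B_P / P B_P`. -/
noncomputable instance (P : PrimeSpectrum A) (N : Type u) [AddCommGroup N] [Module B N] :
    Module (fiberRing A B P) (fiberModule A B P N) :=
  inferInstanceAs (Module (Localization (fiberSubmonoid A B P) ⧸ fiberIdeal A B P)
    (LocalizedModule (fiberSubmonoid A B P) N ⧸
      (fiberIdeal A B P •
        (⊤ : Submodule (Localization (fiberSubmonoid A B P))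
          (LocalizedModule (fiberSubmonoid A B P) N)))))








/-- The canonical `B`-module structure on `M ⊗[A] N`, where `N` is a `B`-module,
given by `b • (m ⊗ n) = m ⊗ (b • n)`. -/
noncomputable instance tensorRightModule (A : Type u) [CommRing A] (B : Type u) [CommRing B]
    [Algebra A B] (M : Type u) [AddCommGroup M] [Module A M]
    (N : Type u) [AddCommGroup N] [Module A N] [Module B N] [IsScalarTower A B N] :
    Module B (M ⊗[A] N) where
  smul b x := (TensorProduct.comm A M N).symm (b • TensorProduct.comm A M N x)
  one_smul x := by
    show (TensorProduct.comm A M N).symm ((1 : B) • TensorProduct.comm A M N x) = x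
    simp
  mul_smul a b x := by
    show (TensorProduct.comm A M N).symm ((a * b) • TensorProduct.comm A M N x) =
      (TensorProduct.comm A M N).symm (a • TensorProduct.comm A M N
        ((TensorProduct.comm A M N).symm (b • TensorProduct.comm A M N x)))
    simp [mul_smul]
  smul_zero b := by
    show (TensorProduct.comm A M N).symm (b • TensorProduct.comm A M N 0) = 0
    simp
  smul_add b x y := by
    show (TensorProduct.comm A M N).symm (b • TensorProduct.comm A M N (x + y)) =
      (TensorProduct.comm A M N).symm (b • TensorProduct.comm A M N x) +
      (TensorProduct.comm A M N).symm (b • TensorProduct.comm A M N y)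
    simp
  add_smul a b x := by
    show (TensorProduct.comm A M N).symm ((a + b) • TensorProduct.comm A M N x) =
      (TensorProduct.comm A M N).symm (a • TensorProduct.comm A M N x) +
      (TensorProduct.comm A M N).symm (b • TensorProduct.comm A M N x)
    simp [add_smul]
  zero_smul x := by
    show (TensorProduct.comm A M N).symm ((0 : B) • TensorProduct.comm A M N x) = 0
    simp

/-!
Localize at a prime `Q` of `B` over `P` and write `R = A_P`, `S = B_Q`, `N' = N_Q`, so that
`(M ⊗ N)_Q = N' ⊗ M_P`. As `N'` is flat over `R`, an `M_P`-regular sequence in `R` maps to an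
`N' ⊗ M_P`-regular one in `S`, and an `N' ⊗ κ(P)`-regular sequence in `S` can be appended to it:
depths add. Dimensions satisfy `dim (N' ⊗ M_P) ≤ dim M_P + dim (N' ⊗ κ(P))`, so the inequalities
`min (n, dim) ≤ depth` for `M_P` and for `N' ⊗ κ(P)` add up to the one for `N' ⊗ M_P`. Finally,
`N' ⊗ κ(P)` is the localization of the fibre module at the prime of `B_P / P B_P` lying over `Q`,
and `S` surjects onto the localized fibre ring, so dimension and regular sequences are the same
over either ring.
-/

section TensorProductTower

attribute [local instance] TensorProduct.leftModule TensorProduct.instModule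

open Pointwise

variable {R S M N : Type*} [CommRing R] [CommRing S] [Algebra R S] [AddCommGroup M] [Module R M]
  [AddCommGroup N] [Module R N] [Module S N] [IsScalarTower R S N]

instance finite_tensorProduct_tower [Module.Finite S N] [Module.Finite R M] :
    Module.Finite S (N ⊗[R] M) :=
  Module.Finite.equiv (AlgebraTensorModule.cancelBaseChange R S S N M)

lemma map_annihilator_le_annihilator_tensorProduct :
    (Module.annihilator R M).map (algebraMap R S) ≤ Module.annihilator S (N ⊗[R] M) := by
  refine Ideal.map_le_iff_le_comap.mpr fun r hr ↦ Module.mem_annihilator.mpr fun x ↦ ?_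
  rw [algebraMap_smul]
  induction x with
  | zero => rw [smul_zero]
  | add x y hx hy => rw [smul_add, hx, hy, add_zero]
  | tmul n m => rw [← tmul_smul, Module.mem_annihilator.mp hr, tmul_zero]

lemma annihilator_le_annihilator_tensorProduct :
    Module.annihilator S N ≤ Module.annihilator S (N ⊗[R] M) := by
  refine fun s hs ↦ Module.mem_annihilator.mpr fun x ↦ ?_
  induction x with
  | zero => rw [smul_zero]
  | add x y hx hy => rw [smul_add, hx, hy, add_zero]
  | tmul n m => rw [smul_tmul', Module.mem_annihilator.mp hs, zero_tmul]

lemma smul_top_quotient_smul_top_eq_bot (I : Ideal R) :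
    (I • ⊤ : Submodule R (M ⧸ (I • ⊤ : Submodule R M))) = ⊥ := by
  rw [← Submodule.range_mkQ, ← Submodule.map_top, ← Submodule.map_smul'', Submodule.mkQ_map_self]

lemma ker_lTensor_mkQ_smul_top (I : Ideal R) :
    LinearMap.ker (AlgebraTensorModule.lTensor S N (I • ⊤ : Submodule R M).mkQ) =
      (I.map (algebraMap R S) • ⊤ : Submodule S (N ⊗[R] M)) := by
  apply le_antisymm
  · have hexact : Function.Exact ((I • ⊤ : Submodule R M).subtype.lTensor N)
        ((I • ⊤ : Submodule R M).mkQ.lTensor N) :=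
      lTensor_exact N (LinearMap.exact_subtype_mkQ _) (Submodule.mkQ_surjective _)
    intro x hx
    obtain ⟨y, rfl⟩ := (hexact x).mp hx
    clear hx hexact
    induction y with
    | zero => rw [map_zero]; exact zero_mem _
    | add y z hy hz => rw [map_add]; exact add_mem hy hz
    | tmul n m =>
      obtain ⟨m, hm⟩ := m
      rw [LinearMap.lTensor_tmul, Submodule.subtype_apply]
      dsimp only
      induction hm using Submodule.smul_induction_on' with
      | smul r hr m _ =>
        rw [TensorProduct.tmul_smul, ← algebraMap_smul S r (n ⊗ₜ[R] m)]
        exact Submodule.smul_mem_smul (Ideal.mem_map_of_mem _ hr) trivial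
      | add y _ z _ hy hz => rw [TensorProduct.tmul_add]; exact add_mem hy hz
  · have hI : I ≤ Module.annihilator R (M ⧸ (I • ⊤ : Submodule R M)) := by
      rw [← Submodule.annihilator_top, Submodule.le_annihilator_iff]
      exact smul_top_quotient_smul_top_eq_bot I
    refine Submodule.smul_le.mpr fun s hs x _ ↦ ?_
    rw [LinearMap.mem_ker, map_smul]
    exact Module.mem_annihilator.mp
      (map_annihilator_le_annihilator_tensorProduct (Ideal.map_mono hI hs)) _

/-- The identification `(N ⊗ M) / I (N ⊗ M) ≃ N ⊗ (M / I M)`, linear over an `R`-algebra `S`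
acting on `N`. -/
def quotMapSMulTopTensorEquiv (M N : Type*) [AddCommGroup M] [Module R M] [AddCommGroup N]
    [Module R N] [Module S N] [IsScalarTower R S N] (I : Ideal R) :
    ((N ⊗[R] M) ⧸ (I.map (algebraMap R S) • ⊤ : Submodule S (N ⊗[R] M))) ≃ₗ[S]
      N ⊗[R] (M ⧸ (I • ⊤ : Submodule R M)) :=
  Submodule.quotEquivOfEq _ _ (ker_lTensor_mkQ_smul_top I).symm ≪≫ₗ
    (AlgebraTensorModule.lTensor S N (I • ⊤ : Submodule R M).mkQ).quotKerEquivOfSurjective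
      (LinearMap.lTensor_surjective N (Submodule.mkQ_surjective _))

/-- The identification `N / I N ≃ N ⊗ (R / I)`, linear over an `R`-algebra `S` acting on `N`. -/
def quotMapSMulTopEquiv (N : Type*) [AddCommGroup N] [Module R N] [Module S N]
    [IsScalarTower R S N] (I : Ideal R) :
    (N ⧸ (I.map (algebraMap R S) • ⊤ : Submodule S N)) ≃ₗ[S] N ⊗[R] (R ⧸ I) :=
  have hmap : (I.map (algebraMap R S) • ⊤ : Submodule S N).map
      (AlgebraTensorModule.rid R S N).symm.toLinearMap = I.map (algebraMap R S) • ⊤ := by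
    rw [Submodule.map_smul'', Submodule.map_top, LinearEquiv.range]
  have hI : (I • ⊤ : Submodule R R) = I := by simp
  (Submodule.Quotient.equiv _ _ (AlgebraTensorModule.rid R S N).symm hmap).trans <|
    (quotMapSMulTopTensorEquiv R N I).trans <|
      AlgebraTensorModule.congr (.refl S N) (Submodule.quotEquivOfEq _ _ hI)

section RTensor

variable {N' : Type*} [AddCommGroup N'] [Module R N'] [Module S N'] [IsScalarTower R S N']

lemma algebraTensorModule_rTensor_surjective {p : N →ₗ[S] N'} (hp : Function.Surjective p) :
    Function.Surjective (AlgebraTensorModule.rTensor R M p) :=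
  LinearMap.rTensor_surjective M (g := p.restrictScalars R) hp

lemma ker_rTensor_of_ker_eq_smul_top {p : N →ₗ[S] N'} (hp : Function.Surjective p) {s : S}
    (hker : LinearMap.ker p = s • ⊤) :
    LinearMap.ker (AlgebraTensorModule.rTensor R M p) = (s • ⊤ : Submodule S (N ⊗[R] M)) := by
  have hexact : Function.Exact (Algebra.lsmul R R N s) (p.restrictScalars R) := fun n ↦ by
    change n ∈ LinearMap.ker p ↔ _
    rw [hker, Submodule.mem_smul_pointwise_iff_exists]
    simp
  ext x
  rw [Submodule.mem_smul_pointwise_iff_exists]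
  refine (rTensor_exact M hexact hp x).trans ?_
  simp only [Submodule.mem_top, true_and]
  exact Iff.rfl

end RTensor

/-- The identification `(N ⊗ M) / s (N ⊗ M) ≃ (N / s N) ⊗ M` for a scalar `s` acting on `N` only. -/
def quotSMulTopTensorEquiv (M N : Type*) [AddCommGroup M] [Module R M] [AddCommGroup N]
    [Module R N] [Module S N] [IsScalarTower R S N] (s : S) :
    QuotSMulTop s (N ⊗[R] M) ≃ₗ[S] QuotSMulTop s N ⊗[R] M :=
  have hp : Function.Surjective (s • ⊤ : Submodule S N).mkQ := Submodule.mkQ_surjective _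
  (Submodule.quotEquivOfEq _ _
    (ker_rTensor_of_ker_eq_smul_top hp (Submodule.ker_mkQ _)).symm).trans
    (LinearMap.quotKerEquivOfSurjective _ (algebraTensorModule_rTensor_surjective hp))

end TensorProductTower

section Regular

attribute [local instance] TensorProduct.leftModule TensorProduct.instModule

open IsLocalRing RingTheory.Sequence Pointwise

variable {R S M N : Type*} [CommRing R] [CommRing S] [Algebra R S] [AddCommGroup M] [Module R M]
  [AddCommGroup N] [Module R N] [Module S N] [IsScalarTower R S N]

lemma isSMulRegular_tensorProduct_of_free {K : Type*} [CommRing K] [Algebra R K] [Module K M]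
    [IsScalarTower R K M] [Module.Free K M] {s : S} (hs : IsSMulRegular (N ⊗[R] K) s) :
    IsSMulRegular (N ⊗[R] M) s := by
  classical
  let b := Module.Free.chooseBasis K M
  let e : N ⊗[R] M ≃ₗ[S] N ⊗[R] (_ →₀ K) :=
    AlgebraTensorModule.congr (LinearEquiv.refl S N) (b.repr.restrictScalars R)
  rw [e.isSMulRegular_congr,
    (TensorProduct.finsuppRight R S N K (Module.Free.ChooseBasisIndex K M)).isSMulRegular_congr]
  intro x y hxy
  ext i
  exact hs (DFunLike.congr_fun hxy i)

lemma flat_quotSMulTop [Module.Flat R N] {s : S}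
    (hs : ∀ I : Ideal R, IsSMulRegular (N ⊗[R] (R ⧸ I)) s) : Module.Flat R (QuotSMulTop s N) := by
  refine Module.Flat.iff_lTensor_injective.mpr fun I _ ↦ ?_
  have hinj : Function.Injective
      (QuotSMulTop.map s (AlgebraTensorModule.lTensor S N I.subtype)) := by
    have h₁₂ : Function.Exact (0 : PUnit →ₗ[S] N ⊗[R] I)
        (AlgebraTensorModule.lTensor S N I.subtype) :=
      LinearMap.exact_zero_iff_injective PUnit _ |>.mpr <|
        Module.Flat.lTensor_preserves_injective_linearMap I.subtype I.injective_subtype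
    have h₂₃ : Function.Exact (AlgebraTensorModule.lTensor S N I.subtype)
        (AlgebraTensorModule.lTensor S N (Submodule.mkQ I)) :=
      lTensor_exact N (LinearMap.exact_subtype_mkQ I) (Submodule.mkQ_surjective I)
    have h := QuotSMulTop.map_first_exact_on_four_term_exact_of_isSMulRegular_last h₁₂ h₂₃ (hs I)
    rw [map_zero] at h
    exact (LinearMap.exact_zero_iff_injective _ _).mp h
  have hcomm : (AlgebraTensorModule.lTensor S (QuotSMulTop s N) I.subtype).comp
      (quotSMulTopTensorEquiv I N s).toLinearMap =
      (quotSMulTopTensorEquiv R N s).toLinearMap.comp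
        (QuotSMulTop.map s (AlgebraTensorModule.lTensor S N I.subtype)) := by
    apply Submodule.linearMap_qext
    ext
    rfl
  refine (injective_iff_map_eq_zero _).mpr fun y hy ↦ ?_
  obtain ⟨x, rfl⟩ := (quotSMulTopTensorEquiv I N s).surjective y
  have hx : quotSMulTopTensorEquiv R N s
      (QuotSMulTop.map s (AlgebraTensorModule.lTensor S N I.subtype) x) = 0 :=
    (LinearMap.congr_fun hcomm x).symm.trans hy
  rw [LinearEquiv.map_eq_zero_iff, map_eq_zero_iff _ hinj] at hx
  rw [hx, map_zero]

variable [IsLocalRing R]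

lemma isSMulRegular_tensorProduct_of_maximalIdeal_smul_eq_bot {s : S}
    (hs : IsSMulRegular (N ⊗[R] ResidueField R) s)
    (hM : (maximalIdeal R • ⊤ : Submodule R M) = ⊥) :
    IsSMulRegular (N ⊗[R] M) s := by
  have htors : Module.IsTorsionBySet R M (maximalIdeal R : Set R) := fun x r ↦
    (Submodule.mem_bot R).mp (hM ▸ Submodule.smul_mem_smul r.2 Submodule.mem_top)
  let _ : Module (ResidueField R) M := htors.module
  have : IsScalarTower R (ResidueField R) M := htors.isScalarTower
  exact isSMulRegular_tensorProduct_of_free hs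

lemma isSMulRegular_tensorProduct_of_maximalIdeal_pow_smul_eq_bot [Module.Flat R N] {s : S}
    (hs : IsSMulRegular (N ⊗[R] ResidueField R) s) (k : ℕ)
    (hM : (maximalIdeal R ^ k • ⊤ : Submodule R M) = ⊥) :
    IsSMulRegular (N ⊗[R] M) s := by
  induction k generalizing M with
  | zero =>
    have : Subsingleton M := by
      rw [pow_zero, Ideal.one_eq_top, Submodule.top_smul] at hM
      exact (Submodule.subsingleton_iff R).mp (subsingleton_of_bot_eq_top hM.symm)
    exact fun x y _ ↦ Subsingleton.elim x y
  | succ k ih =>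
    let mM : Submodule R M := maximalIdeal R • ⊤
    have hsub : IsSMulRegular (N ⊗[R] mM) s := by
      apply ih
      apply Submodule.map_injective_of_injective mM.injective_subtype
      rw [Submodule.map_smul'', Submodule.map_top, Submodule.range_subtype, Submodule.map_bot,
        ← hM, pow_succ, Submodule.mul_smul]
    have hquot : IsSMulRegular (N ⊗[R] (M ⧸ mM)) s :=
      isSMulRegular_tensorProduct_of_maximalIdeal_smul_eq_bot hs
        (smul_top_quotient_smul_top_eq_bot _)
    refine isSMulRegular_of_range_eq_ker (f := AlgebraTensorModule.lTensor S N mM.subtype)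
      (g := AlgebraTensorModule.lTensor S N mM.mkQ) ?_ ?_ hsub hquot
    · exact Module.Flat.lTensor_preserves_injective_linearMap _ mM.injective_subtype
    · ext x
      exact (lTensor_exact N (LinearMap.exact_subtype_mkQ mM) (Submodule.mkQ_surjective _) x).symm

variable [IsNoetherianRing S] [IsLocalRing S] [IsLocalHom (algebraMap R S)] [Module.Flat R N]
  [Module.Finite S N] [Module.Finite R M]

-- Krull's intersection theorem in `N ⊗ M` reduces to the modules `N ⊗ (M / m ^ k M)`.
lemma isSMulRegular_tensorProduct {s : S} (hs : IsSMulRegular (N ⊗[R] ResidueField R) s) :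
    IsSMulRegular (N ⊗[R] M) s := by
  refine IsSMulRegular.of_right_eq_zero_of_smul fun x hx ↦ ?_
  rw [← Submodule.mem_bot S, ← Ideal.iInf_pow_smul_eq_bot_of_isLocalRing (M := N ⊗[R] M)
    (maximalIdeal S) (maximalIdeal.isMaximal S).ne_top, Submodule.mem_iInf]
  intro k
  have hreg : IsSMulRegular (N ⊗[R] (M ⧸ (maximalIdeal R ^ k • ⊤ : Submodule R M))) s :=
    isSMulRegular_tensorProduct_of_maximalIdeal_pow_smul_eq_bot hs k
      (smul_top_quotient_smul_top_eq_bot _)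
  have hker : x ∈ LinearMap.ker
      (AlgebraTensorModule.lTensor S N (maximalIdeal R ^ k • ⊤ : Submodule R M).mkQ) := by
    apply hreg.right_eq_zero_of_smul
    rw [← map_smul, hx, map_zero]
  rw [ker_lTensor_mkQ_smul_top, Ideal.map_pow] at hker
  exact Submodule.smul_mono_left
    (Ideal.pow_right_mono (map_maximalIdeal_le (algebraMap R S)) k) hker

lemma isWeaklyRegular_tensorProduct {ss : List S}
    (hs : IsWeaklyRegular (N ⊗[R] ResidueField R) ss) : IsWeaklyRegular (N ⊗[R] M) ss := by
  induction ss generalizing N with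
  | nil => exact .nil S _
  | cons s ss ih =>
    rw [isWeaklyRegular_cons_iff] at hs ⊢
    have := flat_quotSMulTop fun I ↦ isSMulRegular_tensorProduct (M := R ⧸ I) hs.1
    rw [(quotSMulTopTensorEquiv _ N s).isWeaklyRegular_congr] at hs ⊢
    exact ⟨isSMulRegular_tensorProduct hs.1, ih hs.2⟩

lemma isWeaklyRegular_tensorProduct_append {rs : List R} (hr : IsWeaklyRegular M rs) {ss : List S}
    (hs : IsWeaklyRegular (N ⊗[R] ResidueField R) ss) :
    IsWeaklyRegular (N ⊗[R] M) (rs.map (algebraMap R S) ++ ss) := by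
  rw [isWeaklyRegular_append_iff, isWeaklyRegular_map_algebraMap_iff, ← Ideal.map_ofList,
    (quotMapSMulTopTensorEquiv M N _).isWeaklyRegular_congr]
  exact ⟨hr.isWeaklyRegular_lTensor, isWeaklyRegular_tensorProduct hs⟩

end Regular

section FaithfullyFlat

attribute [local instance] TensorProduct.leftModule TensorProduct.instModule

open IsLocalRing

variable {R S : Type*} [CommRing R] [CommRing S] [Algebra R S]
  (N : Type*) [AddCommGroup N] [Module R N] [Module S N] [IsScalarTower R S N]

lemma faithfullyFlat_of_flat_of_isLocalHom (S : Type*) [CommRing S] [Algebra R S] [IsLocalRing R]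
    [IsLocalRing S] [IsLocalHom (algebraMap R S)] [Module S N] [IsScalarTower R S N]
    [Module.Flat R N] [Module.Finite S N] [Nontrivial N] : Module.FaithfullyFlat R N where
  submodule_ne_top m hm htop := by
    rw [eq_maximalIdeal hm] at htop
    have htopS : ((maximalIdeal R).map (algebraMap R S) • ⊤ : Submodule S N) = ⊤ := by
      apply Submodule.restrictScalars_injective R S N
      rw [Ideal.smul_restrictScalars, Submodule.restrictScalars_top, htop]
    have hle : (⊤ : Submodule S N) ≤ maximalIdeal S • ⊤ :=
      htopS.ge.trans (Submodule.smul_mono_left (map_maximalIdeal_le (algebraMap R S)))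
    exact top_ne_bot (Submodule.eq_bot_of_le_smul_of_le_jacobson_bot (maximalIdeal S) ⊤
      Module.Finite.fg_top hle (maximalIdeal_le_jacobson ⊥))

lemma le_of_map_smul_top_le [Module.FaithfullyFlat R N] {I J : Ideal R}
    (h : (I.map (algebraMap R S) • ⊤ : Submodule S N) ≤ J.map (algebraMap R S) • ⊤) : I ≤ J := by
  intro r hr
  have hzero : (LinearMap.lsmul R (R ⧸ J) r).lTensor N = 0 := by
    rw [show LinearMap.lsmul R (R ⧸ J) r = r • LinearMap.id from rfl, LinearMap.lTensor_smul,
      LinearMap.lTensor_id]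
    refine LinearMap.ext fun x ↦ ?_
    obtain ⟨y, rfl⟩ := (quotMapSMulTopEquiv (S := S) N J).surjective x
    obtain ⟨y, rfl⟩ := Submodule.Quotient.mk_surjective _ y
    have hy : algebraMap R S r • y ∈ (J.map (algebraMap R S) • ⊤ : Submodule S N) :=
      h (Submodule.smul_mem_smul (Ideal.mem_map_of_mem _ hr) Submodule.mem_top)
    rw [LinearMap.smul_apply, LinearMap.id_apply, ← algebraMap_smul S r, ← map_smul,
      ← Submodule.Quotient.mk_smul, (Submodule.Quotient.mk_eq_zero _).mpr hy, map_zero,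
      LinearMap.zero_apply]
  have hr := LinearMap.congr_fun
    ((Module.FaithfullyFlat.zero_iff_lTensor_zero R N _).mpr hzero) (1 : R ⧸ J)
  rwa [LinearMap.lsmul_apply, LinearMap.zero_apply, Algebra.smul_def, mul_one,
    Ideal.Quotient.algebraMap_eq, Ideal.Quotient.eq_zero_iff_mem] at hr

lemma isNoetherianRing_of_faithfullyFlat (S : Type*) [CommRing S] [Algebra R S] [Module S N]
    [IsScalarTower R S N] [Module.FaithfullyFlat R N] [IsNoetherian S N] : IsNoetherianRing R := by
  have hmono : StrictMono fun I : Ideal R ↦ (I.map (algebraMap R S) • ⊤ : Submodule S N) :=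
    Monotone.strictMono_of_injective (fun I J h ↦ Submodule.smul_mono_left (Ideal.map_mono h))
      fun I J h ↦ (le_of_map_smul_top_le N h.le).antisymm (le_of_map_smul_top_le N h.ge)
  exact isNoetherian_iff'.mpr hmono.wellFoundedGT

end FaithfullyFlat

section Dimension

attribute [local instance] TensorProduct.leftModule TensorProduct.instModule

open IsLocalRing

lemma supportDim_eq_of_surjective {S C : Type*} [CommRing S] [CommRing C] [Algebra S C]
    (h : Function.Surjective (algebraMap S C)) (M : Type*) [AddCommGroup M] [Module S M]
    [Module C M] [IsScalarTower S C M] [Module.Finite S M] : supportDim S M = supportDim C M := by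
  have : Module.Finite C M := .of_restrictScalars_finite S C M
  have hann : Module.annihilator S M = (Module.annihilator C M).comap (algebraMap S C) := by
    ext s
    simp [Module.mem_annihilator]
  calc supportDim S M = ringKrullDim (S ⧸ Module.annihilator S M) :=
        Module.supportDim_eq_ringKrullDim_quotient_annihilator S M
    _ = ringKrullDim (C ⧸ Module.annihilator C M) :=
        ringKrullDim_eq_of_ringEquiv <| .ofBijective (Ideal.quotientMap _ (algebraMap S C) hann.le)
          ⟨Ideal.quotientMap_injective' hann.ge, Ideal.quotientMap_surjective h⟩
    _ = supportDim C M := (Module.supportDim_eq_ringKrullDim_quotient_annihilator C M).symm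

lemma supportDim_quotient_smul_top {S : Type*} [CommRing S] (I : Ideal S) (N : Type*)
    [AddCommGroup N] [Module S N] [Module.Finite S N] :
    supportDim S (N ⧸ (I • ⊤ : Submodule S N)) =
      ringKrullDim (S ⧸ (I ⊔ Module.annihilator S N)) := by
  rw [ringKrullDim_quotient, PrimeSpectrum.zeroLocus_sup, supportDim, Module.support_quotient,
    Module.support_eq_zeroLocus, Set.inter_comm]

variable {R S : Type*} [CommRing R] [CommRing S] [Algebra R S]
  [IsLocalRing R] [IsLocalRing S] [IsLocalHom (algebraMap R S)]
  [IsNoetherianRing R] [IsNoetherianRing S]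

lemma ringKrullDim_le_ringKrullDim_add_ringKrullDim_quotient :
    ringKrullDim S ≤
      ringKrullDim R + ringKrullDim (S ⧸ (maximalIdeal R).map (algebraMap R S)) := by
  have : (maximalIdeal S).LiesOver (maximalIdeal R) := ⟨(maximalIdeal_comap _).symm⟩
  have : ((maximalIdeal S).map
      (Ideal.Quotient.mk ((maximalIdeal R).map (algebraMap R S)))).IsPrime :=
    Ideal.map_isPrime_of_surjective Ideal.Quotient.mk_surjective
      (by rw [Ideal.mk_ker]; exact map_maximalIdeal_le _)
  rw [← maximalIdeal_height_eq_ringKrullDim, ← maximalIdeal_height_eq_ringKrullDim]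
  refine (WithBot.coe_le_coe.mpr
    (Ideal.height_le_height_add_of_liesOver (maximalIdeal R) (maximalIdeal S))).trans ?_
  rw [WithBot.coe_add]
  gcongr
  exact Ideal.height_le_ringKrullDim_of_isPrime

lemma ringKrullDim_quotient_le_add {I : Ideal R} {J : Ideal S} (hJ : J ≠ ⊤)
    (hIJ : I ≤ J.comap (algebraMap R S)) :
    ringKrullDim (S ⧸ J) ≤ ringKrullDim (R ⧸ I) +
      ringKrullDim (S ⧸ (J ⊔ (maximalIdeal R).map (algebraMap R S))) := by
  have : Nontrivial (S ⧸ J) := Ideal.Quotient.nontrivial_iff.mpr hJ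
  have : Nontrivial (R ⧸ I) := Ideal.Quotient.nontrivial_iff.mpr
    fun h ↦ hJ (Ideal.comap_eq_top_iff.mp (top_le_iff.mp (h ▸ hIJ)))
  have : IsLocalRing (R ⧸ I) := .of_surjective' _ Ideal.Quotient.mk_surjective
  have : IsLocalRing (S ⧸ J) := .of_surjective' _ Ideal.Quotient.mk_surjective
  let : Algebra (R ⧸ I) (S ⧸ J) := (Ideal.quotientMap J (algebraMap R S) hIJ).toAlgebra
  have halg : (algebraMap (R ⧸ I) (S ⧸ J)).comp (Ideal.Quotient.mk I) =
      (Ideal.Quotient.mk J).comp (algebraMap R S) := rfl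
  have : IsLocalHom (Ideal.Quotient.mk J) := .of_surjective _ Ideal.Quotient.mk_surjective
  have : IsLocalHom (algebraMap (R ⧸ I) (S ⧸ J)) :=
    ⟨fun x hx ↦ by
      obtain ⟨r, rfl⟩ := Ideal.Quotient.mk_surjective x
      rw [← RingHom.comp_apply, halg, RingHom.comp_apply] at hx
      exact (isUnit_of_map_unit (algebraMap R S) r (isUnit_of_map_unit _ _ hx)).map _⟩
  have hmap : (maximalIdeal (R ⧸ I)).map (algebraMap (R ⧸ I) (S ⧸ J)) =
      ((maximalIdeal R).map (algebraMap R S)).map (Ideal.Quotient.mk J) := by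
    rw [← map_maximalIdeal_of_surjective _ (Ideal.Quotient.mk_surjective (I := I)), Ideal.map_map,
      halg, Ideal.map_map]
  have hdim := ringKrullDim_le_ringKrullDim_add_ringKrullDim_quotient (R := R ⧸ I) (S := S ⧸ J)
  rwa [hmap, ringKrullDim_eq_of_ringEquiv (DoubleQuot.quotQuotEquivQuotSup J _)] at hdim

variable {M N : Type*} [AddCommGroup M] [Module R M] [AddCommGroup N] [Module R N] [Module S N]
  [IsScalarTower R S N] [Module.Finite R M] [Module.Finite S N]

lemma supportDim_tensorProduct_le_add [Nontrivial (N ⊗[R] M)] :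
    supportDim S (N ⊗[R] M) ≤ supportDim R M + supportDim S (N ⊗[R] ResidueField R) := by
  let J := (Module.annihilator R M).map (algebraMap R S) ⊔ Module.annihilator S N
  have hJ : J ≤ Module.annihilator S (N ⊗[R] M) :=
    sup_le map_annihilator_le_annihilator_tensorProduct annihilator_le_annihilator_tensorProduct
  have hJtop : J ≠ ⊤ := fun h ↦ not_subsingleton (N ⊗[R] M)
    (Module.annihilator_eq_top_iff.mp (top_le_iff.mp (h ▸ hJ)))
  have hle : (maximalIdeal R).map (algebraMap R S) ⊔ Module.annihilator S N ≤
      J ⊔ (maximalIdeal R).map (algebraMap R S) :=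
    sup_le le_sup_right (le_sup_right.trans le_sup_left)
  calc supportDim S (N ⊗[R] M)
    _ = ringKrullDim (S ⧸ Module.annihilator S (N ⊗[R] M)) :=
      Module.supportDim_eq_ringKrullDim_quotient_annihilator S _
    _ ≤ ringKrullDim (S ⧸ J) :=
      ringKrullDim_le_of_surjective (Ideal.Quotient.factor hJ) (Ideal.Quotient.factor_surjective hJ)
    _ ≤ ringKrullDim (R ⧸ Module.annihilator R M) +
        ringKrullDim (S ⧸ (J ⊔ (maximalIdeal R).map (algebraMap R S))) :=
      ringKrullDim_quotient_le_add hJtop (Ideal.map_le_iff_le_comap.mp le_sup_left)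
    _ ≤ ringKrullDim (R ⧸ Module.annihilator R M) +
        ringKrullDim (S ⧸ ((maximalIdeal R).map (algebraMap R S) ⊔ Module.annihilator S N)) := by
      gcongr
      exact ringKrullDim_le_of_surjective (Ideal.Quotient.factor hle)
        (Ideal.Quotient.factor_surjective hle)
    _ = supportDim R M + supportDim S (N ⊗[R] ResidueField R) := by
      congr 1
      · exact (Module.supportDim_eq_ringKrullDim_quotient_annihilator R M).symm
      · rw [← supportDim_quotient_smul_top]
        exact Module.supportDim_eq_of_equiv (quotMapSMulTopEquiv N (maximalIdeal R))

end Dimension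

section LocalSerreCondS

attribute [local instance] TensorProduct.leftModule TensorProduct.instModule

open IsLocalRing RingTheory.Sequence

/-- The inequality required by Serre's condition `(S_n)` at the maximal ideal of a local ring:
`SerreCondS A n M` asks for it at every localization of `M` at a prime in its support. -/
def LocalSerreCondS (R : Type*) [CommRing R] [IsLocalRing R] (n : ℕ) (M : Type*) [AddCommGroup M]
    [Module R M] : Prop :=
  min (n : WithBot ℕ∞) (supportDim R M) ≤ (localDepth R M : WithBot ℕ∞)

lemma localDepth_congr {R M M' : Type*} [CommRing R] [IsLocalRing R] [AddCommGroup M] [Module R M]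
    [AddCommGroup M'] [Module R M'] (e : M ≃ₗ[R] M') : localDepth R M = localDepth R M' := by
  simp only [localDepth, idealDepth, e.isRegular_congr]

lemma LocalSerreCondS.congr {R M M' : Type*} [CommRing R] [IsLocalRing R] [AddCommGroup M]
    [Module R M] [AddCommGroup M'] [Module R M'] {n : ℕ} (e : M ≃ₗ[R] M')
    (h : LocalSerreCondS R n M) : LocalSerreCondS R n M' := by
  rw [LocalSerreCondS, ← localDepth_congr e]
  exact (min_le_min_left _ (Module.supportDim_eq_of_equiv e).ge).trans h

lemma localDepth_le_of_surjective {S C : Type*} [CommRing S] [CommRing C] [IsLocalRing S]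
    [IsLocalRing C] [Algebra S C] (h : Function.Surjective (algebraMap S C))
    (M : Type*) [AddCommGroup M] [Module S M] [Module C M] [IsScalarTower S C M] :
    localDepth C M ≤ localDepth S M := by
  refine sSup_le ?_
  rintro _ ⟨cs, rfl, hmem, hreg⟩
  obtain ⟨ss, rfl⟩ := List.map_surjective_iff.mpr h cs
  have hss : ∀ s ∈ ss, s ∈ maximalIdeal S := fun s hs hunit ↦
    hmem _ (List.mem_map_of_mem hs) (hunit.map _)
  refine le_sSup ⟨ss, by rw [List.length_map], hss, ?_⟩
  exact ((AddEquiv.refl M).isRegular_congr (List.forall₂_map_left_iff.mpr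
    (List.forall₂_same.mpr fun s _ ↦ algebraMap_smul C s))).mp hreg

lemma LocalSerreCondS.of_surjective {S C : Type*} [CommRing S] [CommRing C] [IsLocalRing S]
    [IsLocalRing C] [Algebra S C] (h : Function.Surjective (algebraMap S C)) {M : Type*}
    [AddCommGroup M] [Module S M] [Module C M] [IsScalarTower S C M] [Module.Finite S M] {n : ℕ}
    (hM : LocalSerreCondS C n M) : LocalSerreCondS S n M := by
  rw [LocalSerreCondS, supportDim_eq_of_surjective h M]
  exact hM.trans (WithBot.coe_le_coe.mpr (localDepth_le_of_surjective h M))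

lemma LocalSerreCondS.of_subsingleton {R M : Type*} [CommRing R] [IsLocalRing R] [AddCommGroup M]
    [Module R M] [Subsingleton M] {n : ℕ} : LocalSerreCondS R n M := by
  have h : supportDim R M = ⊥ := Module.supportDim_eq_bot_of_subsingleton R M
  rw [LocalSerreCondS, h]
  exact (min_le_right _ _).trans bot_le

lemma SerreCondS.localSerreCondS {A : Type u} [CommRing A] {n : ℕ} {M : Type v} [AddCommGroup M]
    [Module A M] (h : SerreCondS A n M) (P : PrimeSpectrum A) :
    LocalSerreCondS (Localization.AtPrime P.asIdeal) n
      (LocalizedModule P.asIdeal.primeCompl M) := by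
  by_cases hP : P ∈ Module.support A M
  · exact h P hP
  · have := Module.notMem_support_iff.mp hP
    exact .of_subsingleton

lemma localDepth_set_nonempty (R M : Type*) [CommRing R] [IsLocalRing R] [AddCommGroup M]
    [Module R M] [Nontrivial M] :
    {n : ℕ∞ | ∃ rs : List R, (rs.length : ℕ∞) = n ∧ (∀ r ∈ rs, r ∈ maximalIdeal R) ∧
      IsRegular M rs}.Nonempty :=
  ⟨0, [], Nat.cast_zero, by simp, .nil R M⟩

variable {R S M N : Type*} [CommRing R] [CommRing S] [Algebra R S] [AddCommGroup M] [Module R M]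
  [AddCommGroup N] [Module R N] [Module S N] [IsScalarTower R S N]

lemma nontrivial_left_of_tensorProduct (h : Nontrivial (N ⊗[R] M)) : Nontrivial N := by
  contrapose! h
  infer_instance

lemma nontrivial_right_of_tensorProduct (h : Nontrivial (N ⊗[R] M)) : Nontrivial M := by
  contrapose! h
  infer_instance

variable [IsLocalRing R] [IsLocalRing S] [IsLocalHom (algebraMap R S)] [IsNoetherianRing S]
  [Module.Finite R M] [Module.Finite S N] [Module.Flat R N] [Nontrivial (N ⊗[R] M)]

lemma localDepth_add_localDepth_le_localDepth_tensorProduct :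
    localDepth R M + localDepth S (N ⊗[R] ResidueField R) ≤ localDepth S (N ⊗[R] M) := by
  have : Nontrivial M := nontrivial_right_of_tensorProduct (R := R) (N := N) ‹_›
  have : Nontrivial N := nontrivial_left_of_tensorProduct (R := R) (M := M) ‹_›
  have : Module.FaithfullyFlat R N := faithfullyFlat_of_flat_of_isLocalHom N S
  rw [localDepth, localDepth, idealDepth, idealDepth, ENat.sSup_add (localDepth_set_nonempty R M)]
  refine iSup₂_le fun _ ha ↦ ?_
  rw [ENat.add_sSup (localDepth_set_nonempty S (N ⊗[R] ResidueField R))]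
  refine iSup₂_le fun _ hb ↦ ?_
  obtain ⟨rs, rfl, hrs, hr⟩ := ha
  obtain ⟨ss, rfl, hss, hs⟩ := hb
  have hmem : ∀ t ∈ rs.map (algebraMap R S) ++ ss, t ∈ maximalIdeal S := by
    intro t ht
    rcases List.mem_append.mp ht with ht | ht
    · obtain ⟨r, hr, rfl⟩ := List.mem_map.mp ht
      exact map_maximalIdeal_le _ (Ideal.mem_map_of_mem _ (hrs r hr))
    · exact hss t ht
  refine le_sSup ⟨rs.map (algebraMap R S) ++ ss, by simp, hmem, ?_⟩
  exact IsRegular.of_isWeaklyRegular_of_mem_maximalIdeal (N ⊗[R] M) hmem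
    (isWeaklyRegular_tensorProduct_append hr.toIsWeaklyRegular hs.toIsWeaklyRegular)

lemma min_le_of_le_add {n a b c : WithBot ℕ∞} {x y z : ℕ∞} (hc : c ≤ a + b)
    (hx : min n a ≤ x) (hy : min n b ≤ y) (hz : x + y ≤ z) : min n c ≤ z := by
  have hxz : (x : WithBot ℕ∞) ≤ z := WithBot.coe_le_coe.mpr (le_self_add.trans hz)
  have hyz : (y : WithBot ℕ∞) ≤ z := WithBot.coe_le_coe.mpr (le_add_self.trans hz)
  rcases min_le_iff.mp hx with hx | hx
  · exact (min_le_left _ _).trans (hx.trans hxz)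
  rcases min_le_iff.mp hy with hy | hy
  · exact (min_le_left _ _).trans (hy.trans hyz)
  calc min n c ≤ c := min_le_right _ _
    _ ≤ a + b := hc
    _ ≤ x + y := add_le_add hx hy
    _ ≤ z := mod_cast hz

lemma LocalSerreCondS.tensorProduct {n : ℕ} (hM : LocalSerreCondS R n M)
    (hN : LocalSerreCondS S n (N ⊗[R] ResidueField R)) : LocalSerreCondS S n (N ⊗[R] M) := by
  have : Nontrivial N := nontrivial_left_of_tensorProduct (R := R) (M := M) ‹_›
  have : Module.FaithfullyFlat R N := faithfullyFlat_of_flat_of_isLocalHom N S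
  have : IsNoetherianRing R := isNoetherianRing_of_faithfullyFlat N S
  exact min_le_of_le_add supportDim_tensorProduct_le_add hM hN
    localDepth_add_localDepth_le_localDepth_tensorProduct

end LocalSerreCondS

section IsLocalizedModule

variable {B : Type*} [CommRing B]

lemma localized'_smul_top (T : Submonoid B) (L : Type*) [CommRing L] [Algebra B L]
    [IsLocalization T L] {N N' : Type*} [AddCommGroup N] [Module B N] [AddCommGroup N']
    [Module B N'] [Module L N'] [IsScalarTower B L N'] (g : N →ₗ[B] N') [IsLocalizedModule T g]
    (J : Ideal B) :
    (J • ⊤ : Submodule B N).localized' L T g = J.map (algebraMap B L) • ⊤ := by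
  rw [Submodule.localized'_smul, Ideal.localized'_eq_map, Submodule.localized'_top]

lemma exists_isLocalizedModule_quotient_smul_top (T : Submonoid B) (L : Type*) [CommRing L]
    [Algebra B L] [IsLocalization T L] {N N' : Type*} [AddCommGroup N] [Module B N]
    [AddCommGroup N'] [Module B N'] [Module L N'] [IsScalarTower B L N'] (g : N →ₗ[B] N')
    [IsLocalizedModule T g] (J : Ideal B) :
    ∃ φ : (N ⧸ (J • ⊤ : Submodule B N)) →ₗ[B]
      N' ⧸ (J.map (algebraMap B L) • ⊤ : Submodule L N'), IsLocalizedModule T φ := by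
  rw [← localized'_smul_top T L g]
  exact ⟨(J • ⊤ : Submodule B N).toLocalizedQuotient' L T g, inferInstance⟩

lemma flat_of_isLocalizedModule_tower {A : Type*} [CommRing A] [Algebra A B] (T : Submonoid B)
    {N N' : Type*} [AddCommGroup N] [Module A N] [Module B N] [IsScalarTower A B N]
    [AddCommGroup N'] [Module A N'] [Module B N'] [IsScalarTower A B N'] (g : N →ₗ[B] N')
    [IsLocalizedModule T g] [Module.Flat A N] : Module.Flat A N' := by
  rw [Module.Flat.iff_lTensor_injectiveₛ]
  intro X _ _ Y
  rw [← AlgebraTensorModule.coe_lTensor (A := B), ← IsLocalizedModule.map_lTensor (S := T) (g := g)]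
  refine IsLocalizedModule.map_injective T _ _ _ ?_
  rw [AlgebraTensorModule.coe_lTensor]
  exact Module.Flat.lTensor_preserves_injective_linearMap _ Subtype.val_injective

section Comp

variable {K : Type*} [CommRing K] [Algebra B K] {Q : Ideal B} [Q.IsPrime]

lemma exists_mul_eq_algebraMap_of_notMem {q : Ideal K} [q.LiesOver Q] {k : K} (hk : k ∉ q)
    (h : ∃ b s : B, IsUnit (algebraMap B K s) ∧ algebraMap B K s * k = algebraMap B K b) :
    ∃ b ∈ Q.primeCompl, ∃ s : B, algebraMap B K s * k = algebraMap B K b := by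
  obtain ⟨b, s, hs, hb⟩ := h
  refine ⟨b, fun hbQ : b ∈ Q ↦ hk ?_, s, hb⟩
  rwa [Ideal.mem_of_liesOver q Q, ← hb, Ideal.unit_mul_mem_iff_mem q hs] at hbQ

lemma isLocalizedModule_restrictScalars_comp
    (hK : ∀ k : K, ∃ b s : B, IsUnit (algebraMap B K s) ∧ algebraMap B K s * k = algebraMap B K b)
    {T : Submonoid B} (hT : T ≤ Q.primeCompl) (q : Ideal K) [q.IsPrime] [q.LiesOver Q]
    {N Φ F : Type*} [AddCommGroup N] [Module B N] [AddCommGroup Φ] [Module B Φ] [Module K Φ]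
    [IsScalarTower B K Φ] [AddCommGroup F] [Module B F] [Module K F] [IsScalarTower B K F]
    (π : N →ₗ[B] Φ) [IsLocalizedModule T π] (j : Φ →ₗ[K] F) [IsLocalizedModule q.primeCompl j] :
    IsLocalizedModule Q.primeCompl (j.restrictScalars B ∘ₗ π) := by
  refine ⟨fun t ↦ ?_, fun y ↦ ?_, fun {x y} hxy ↦ ?_⟩
  · have htq : algebraMap B K t ∈ q.primeCompl := fun h ↦ t.2 ((Ideal.mem_of_liesOver q Q _).mpr h)
    have hunit := IsLocalizedModule.map_units j ⟨algebraMap B K t, htq⟩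
    rw [Module.End.isUnit_iff] at hunit ⊢
    convert! hunit using 1
    ext y
    exact (algebraMap_smul K (t : B) y).symm
  · obtain ⟨⟨z, k⟩, hz : (k : K) • y = j z⟩ := IsLocalizedModule.surj q.primeCompl j y
    obtain ⟨⟨x, t⟩, hx : (t : B) • z = π x⟩ := IsLocalizedModule.surj T π z
    obtain ⟨b, hbQ, s, hb⟩ := exists_mul_eq_algebraMap_of_notMem (Q := Q) k.2 (hK k)
    refine ⟨⟨s • x, ⟨t * b, mul_mem (hT t.2) hbQ⟩⟩, ?_⟩
    calc ((t : B) * b) • y = (t : B) • s • j z := by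
          rw [mul_smul, ← algebraMap_smul K b, ← hb, mul_smul, hz, algebraMap_smul]
      _ = s • j (π x) := by rw [smul_comm, ← hx, j.map_smul_of_tower]
      _ = j (π (s • x)) := by rw [map_smul, j.map_smul_of_tower]
  · obtain ⟨k, hk : (k : K) • π x = (k : K) • π y⟩ :=
      IsLocalizedModule.exists_of_eq (S := q.primeCompl) (f := j) hxy
    obtain ⟨b, hbQ, s, hb⟩ := exists_mul_eq_algebraMap_of_notMem (Q := Q) k.2 (hK k)
    have hπ : π (b • x) = π (b • y) := by
      rw [map_smul, map_smul, ← algebraMap_smul K b, ← algebraMap_smul K b (π y), ← hb, mul_smul,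
        mul_smul, hk]
    obtain ⟨t, ht : (t : B) • b • x = (t : B) • b • y⟩ :=
      IsLocalizedModule.exists_of_eq (S := T) hπ
    refine ⟨⟨t * b, mul_mem (hT t.2) hbQ⟩, ?_⟩
    change ((t : B) * b) • x = ((t : B) * b) • y
    rw [mul_smul, mul_smul, ht]

end Comp

end IsLocalizedModule

section Fiber

open IsLocalRing

instance fiberRing.algebra (P : PrimeSpectrum A) : Algebra B (fiberRing A B P) :=
  inferInstanceAs (Algebra B (Localization (fiberSubmonoid A B P) ⧸ fiberIdeal A B P))

instance fiberModule.module (P : PrimeSpectrum A) (N : Type u) [AddCommGroup N] [Module B N] :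
    Module B (fiberModule A B P N) :=
  inferInstanceAs (Module B (LocalizedModule (fiberSubmonoid A B P) N ⧸
    (fiberIdeal A B P • ⊤ : Submodule (Localization (fiberSubmonoid A B P)) _)))

instance fiberModule.isScalarTower (P : PrimeSpectrum A) (N : Type u) [AddCommGroup N]
    [Module B N] : IsScalarTower B (fiberRing A B P) (fiberModule A B P N) :=
  .of_algebraMap_smul fun b x ↦
    algebraMap_smul (Localization (fiberSubmonoid A B P)) b (M := LocalizedModule _ N ⧸ _) x

variable {A B} (P : PrimeSpectrum A)

lemma fiberIdeal_eq_map : fiberIdeal A B P =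
    (P.asIdeal.map (algebraMap A B)).map (algebraMap B (Localization (fiberSubmonoid A B P))) :=
  (Ideal.map_map _ _).symm

lemma exists_isUnit_algebraMap_mul_eq_fiberRing (k : fiberRing A B P) :
    ∃ b s : B, IsUnit (algebraMap B (fiberRing A B P) s) ∧
      algebraMap B (fiberRing A B P) s * k = algebraMap B (fiberRing A B P) b := by
  obtain ⟨x, rfl⟩ := Ideal.Quotient.mk_surjective (I := fiberIdeal A B P) k
  obtain ⟨⟨b, s⟩, h⟩ := IsLocalization.surj (fiberSubmonoid A B P) x
  rw [mul_comm] at h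
  exact ⟨b, s, (IsLocalization.map_units _ s).map (Ideal.Quotient.mk (fiberIdeal A B P)),
    congrArg (Ideal.Quotient.mk (fiberIdeal A B P)) h⟩

lemma exists_isLocalizedModule_fiberModule (N : Type u) [AddCommGroup N] [Module B N] :
    ∃ φ : (N ⧸ (P.asIdeal.map (algebraMap A B) • ⊤ : Submodule B N)) →ₗ[B] fiberModule A B P N,
      IsLocalizedModule (fiberSubmonoid A B P) φ := by
  have h := exists_isLocalizedModule_quotient_smul_top (fiberSubmonoid A B P)
    (Localization (fiberSubmonoid A B P))
    (LocalizedModule.mkLinearMap (fiberSubmonoid A B P) N) (P.asIdeal.map (algebraMap A B))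
  rw [← fiberIdeal_eq_map] at h
  exact h

section LiesOver

variable (Q : Ideal B) [Q.IsPrime] [Q.LiesOver P.asIdeal]

lemma fiberSubmonoid_le_primeCompl : fiberSubmonoid A B P ≤ Q.primeCompl := by
  rintro _ ⟨a, ha, rfl⟩ haQ
  exact ha ((Ideal.mem_of_liesOver Q P.asIdeal a).mpr haQ)

lemma exists_isPrime_liesOver_fiberRing :
    ∃ q : Ideal (fiberRing A B P), q.IsPrime ∧ q.LiesOver Q := by
  let φ : Localization (fiberSubmonoid A B P) →+* Q.ResidueField :=
    IsLocalization.lift (M := fiberSubmonoid A B P) (g := algebraMap B Q.ResidueField) fun s ↦ by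
      rw [isUnit_iff_ne_zero, ne_eq, Ideal.algebraMap_residueField_eq_zero]
      exact fiberSubmonoid_le_primeCompl P Q s.2
  have hφ (b : B) : φ (algebraMap B _ b) = algebraMap B Q.ResidueField b :=
    IsLocalization.lift_eq _ b
  have hker : fiberIdeal A B P ≤ RingHom.ker φ := by
    refine Ideal.map_le_iff_le_comap.mpr fun a ha ↦ ?_
    rw [Ideal.mem_comap, RingHom.mem_ker, RingHom.comp_apply, hφ,
      Ideal.algebraMap_residueField_eq_zero, ← Ideal.mem_of_liesOver Q P.asIdeal]
    exact ha
  let ψ : fiberRing A B P →+* Q.ResidueField := Ideal.Quotient.lift (fiberIdeal A B P) φ hker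
  refine ⟨RingHom.ker ψ, RingHom.ker_isPrime ψ, ⟨?_⟩⟩
  ext b
  rw [Ideal.mem_under, RingHom.mem_ker, ← Ideal.algebraMap_residueField_eq_zero, ← hφ]
  exact Iff.rfl

end LiesOver

end Fiber

section LocalizationTensorProduct

attribute [local instance] TensorProduct.leftModule TensorProduct.instModule

variable (M : Type u) [AddCommGroup M] [Module A M] (N : Type u) [AddCommGroup N] [Module A N]
  [Module B N] [IsScalarTower A B N]

/-- The swap `M ⊗ N ≃ N ⊗ M`, linear over an algebra `B` acting on `N`; the left side carries the
structure `tensorRightModule`. -/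
def commTensorRight : M ⊗[A] N ≃ₗ[B] N ⊗[A] M where
  __ := TensorProduct.comm A M N
  map_smul' _ _ := (TensorProduct.comm A M N).apply_symm_apply _

variable {A B N}

/-- The identification `(M ⊗ N)_q ≃ N_q ⊗ M_p` for submonoids `p` of `A` and `q` of `B` such that
`B_q` is an `A_p`-algebra; `N'` stands for `N_q`. -/
def localizedTensorEquiv (p : Submonoid A) (q : Submonoid B)
    [Algebra (Localization p) (Localization q)]
    [IsScalarTower A (Localization p) (Localization q)]
    {N' : Type*} [AddCommGroup N'] [Module A N'] [Module B N'] [Module (Localization p) N']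
    [Module (Localization q) N'] [IsScalarTower A B N'] [IsScalarTower A (Localization p) N']
    [IsScalarTower (Localization p) (Localization q) N'] [IsScalarTower B (Localization q) N']
    (g : N →ₗ[B] N') [IsLocalizedModule q g] :
    LocalizedModule q (M ⊗[A] N) ≃ₗ[Localization q] N' ⊗[Localization p] LocalizedModule p M :=
  have : IsScalarTower A (Localization q) N' := .to₁₃₄ A (Localization p) _ _
  (LinearEquiv.extendScalarsOfIsLocalization q (Localization q)
    (IsLocalizedModule.iso q (AlgebraTensorModule.rTensor A M g ∘ₗ
      (commTensorRight A B M N).toLinearMap))).trans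
  ((AlgebraTensorModule.cancelBaseChange A (Localization p) (Localization q) N' M).symm.trans
  (AlgebraTensorModule.congr (.refl (Localization q) N')
    (LocalizedModule.equivTensorProduct p M).symm))

end LocalizationTensorProduct

section LocalizedTensorProduct

attribute [local instance] TensorProduct.leftModule TensorProduct.instModule

open IsLocalRing

variable {A B} {P : PrimeSpectrum A} {Q : PrimeSpectrum B} [Q.asIdeal.LiesOver P.asIdeal]
  [Algebra (Localization.AtPrime P.asIdeal) (Localization.AtPrime Q.asIdeal)]
  [Localization.AtPrime.IsLiesOverAlgebra P.asIdeal Q.asIdeal]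
  {N : Type u} [AddCommGroup N] [Module B N] {N' : Type*} [AddCommGroup N'] [Module B N']
  [Module (Localization.AtPrime P.asIdeal) N'] [Module (Localization.AtPrime Q.asIdeal) N']
  [IsScalarTower (Localization.AtPrime P.asIdeal) (Localization.AtPrime Q.asIdeal) N']
  [IsScalarTower B (Localization.AtPrime Q.asIdeal) N']

lemma map_maximalIdeal_atPrime_of_liesOver :
    (maximalIdeal (Localization.AtPrime P.asIdeal)).map
        (algebraMap _ (Localization.AtPrime Q.asIdeal)) =
      (P.asIdeal.map (algebraMap A B)).map (algebraMap B _) := by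
  rw [← Localization.AtPrime.map_eq_maximalIdeal, Ideal.map_map, Ideal.map_map,
    ← IsScalarTower.algebraMap_eq, ← IsScalarTower.algebraMap_eq]

lemma nonempty_linearEquiv_localizedModule_fiberModule (g : N →ₗ[B] N')
    [IsLocalizedModule Q.asIdeal.primeCompl g] {q : Ideal (fiberRing A B P)} [q.IsPrime]
    [q.LiesOver Q.asIdeal] {F : Type*} [AddCommGroup F] [Module B F] [Module (fiberRing A B P) F]
    [Module (Localization.AtPrime Q.asIdeal) F] [IsScalarTower B (fiberRing A B P) F]
    [IsScalarTower B (Localization.AtPrime Q.asIdeal) F]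
    (j : fiberModule A B P N →ₗ[fiberRing A B P] F) [IsLocalizedModule q.primeCompl j] :
    Nonempty (F ≃ₗ[Localization.AtPrime Q.asIdeal]
      N' ⊗[Localization.AtPrime P.asIdeal] ResidueField (Localization.AtPrime P.asIdeal)) := by
  obtain ⟨π, hπ⟩ := exists_isLocalizedModule_fiberModule (B := B) P N
  have hρ := exists_isLocalizedModule_quotient_smul_top Q.asIdeal.primeCompl
    (Localization.AtPrime Q.asIdeal) g (P.asIdeal.map (algebraMap A B))
  rw [← map_maximalIdeal_atPrime_of_liesOver] at hρ
  obtain ⟨ρ, hρ⟩ := hρ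
  have := isLocalizedModule_restrictScalars_comp (exists_isUnit_algebraMap_mul_eq_fiberRing P)
    (fiberSubmonoid_le_primeCompl P Q.asIdeal) q π j
  exact ⟨((IsLocalizedModule.linearEquiv Q.asIdeal.primeCompl (j.restrictScalars B ∘ₗ π)
    ρ).extendScalarsOfIsLocalization Q.asIdeal.primeCompl _).trans
      (quotMapSMulTopEquiv N' (maximalIdeal (Localization.AtPrime P.asIdeal)))⟩

lemma SerreCondS.localSerreCondS_tensorProduct_residueField [Module.Finite B N] {n : ℕ}
    (h : SerreCondS (fiberRing A B P) n (fiberModule A B P N)) (g : N →ₗ[B] N')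
    [IsLocalizedModule Q.asIdeal.primeCompl g] :
    LocalSerreCondS (Localization.AtPrime Q.asIdeal) n (N' ⊗[Localization.AtPrime P.asIdeal]
      ResidueField (Localization.AtPrime P.asIdeal)) := by
  obtain ⟨q, hq, hqQ⟩ := exists_isPrime_liesOver_fiberRing P Q.asIdeal
  let S := Localization.AtPrime Q.asIdeal
  let C := Localization.AtPrime q
  let F := LocalizedModule q.primeCompl (fiberModule A B P N)
  let : Algebra S C := Localization.AtPrime.algebraOfLiesOver Q.asIdeal q
  have hSC : Function.Surjective (algebraMap S C) :=
    (RingHom.surjectiveOnStalks_of_exists_div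
      (exists_isUnit_algebraMap_mul_eq_fiberRing P)).localRingHom_surjective _ q hqQ.over
  let : Module S F := Module.compHom F (algebraMap S C)
  have : IsScalarTower S C F := .of_algebraMap_smul fun _ _ ↦ rfl
  have : IsScalarTower B S F := .to₁₂₄ B S C F
  have : IsScalarTower B (fiberRing A B P) F := .to₁₂₄ B (fiberRing A B P) C F
  obtain ⟨e⟩ := nonempty_linearEquiv_localizedModule_fiberModule (Q := Q) (q := q) g
    (LocalizedModule.mkLinearMap q.primeCompl (fiberModule A B P N))
  have : Module.Finite S N' := .of_isLocalizedModule Q.asIdeal.primeCompl g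
  have : Module.Finite S F := .equiv e.symm
  exact ((h.localSerreCondS ⟨q, hq⟩).of_surjective hSC).congr e

lemma SerreCondS.localSerreCondS_tensorProduct [IsNoetherianRing B] [Module.Finite B N] [Module A N]
    [IsScalarTower A B N] [Module.Flat A N] [Module A N'] [IsScalarTower A B N']
    [IsScalarTower A (Localization.AtPrime P.asIdeal) N'] {M : Type u} [AddCommGroup M] [Module A M]
    [Module.Finite A M] (g : N →ₗ[B] N') [IsLocalizedModule Q.asIdeal.primeCompl g]
    [Nontrivial (N' ⊗[Localization.AtPrime P.asIdeal] LocalizedModule P.asIdeal.primeCompl M)]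
    {n : ℕ} (hM : SerreCondS A n M) (hN : SerreCondS (fiberRing A B P) n (fiberModule A B P N)) :
    LocalSerreCondS (Localization.AtPrime Q.asIdeal) n
      (N' ⊗[Localization.AtPrime P.asIdeal] LocalizedModule P.asIdeal.primeCompl M) := by
  let R := Localization.AtPrime P.asIdeal
  let S := Localization.AtPrime Q.asIdeal
  have : IsLocalHom (algebraMap R S) := by
    rw [Localization.AtPrime.IsLiesOverAlgebra.algebraMap_eq]
    exact Localization.isLocalHom_localRingHom ..
  have : IsNoetherianRing S := IsLocalization.isNoetherianRing Q.asIdeal.primeCompl S ‹_›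
  have : Module.Finite S N' := .of_isLocalizedModule Q.asIdeal.primeCompl g
  have : Module.Flat A N' := flat_of_isLocalizedModule_tower Q.asIdeal.primeCompl g
  have : Module.Flat R N' := (Module.flat_iff_of_isLocalization R P.asIdeal.primeCompl N').mpr ‹_›
  have : Module.Finite R (LocalizedModule P.asIdeal.primeCompl M) :=
    .of_isLocalizedModule P.asIdeal.primeCompl (LocalizedModule.mkLinearMap _ M)
  exact (hM.localSerreCondS P).tensorProduct (hN.localSerreCondS_tensorProduct_residueField g)

end LocalizedTensorProduct

theorem tensor_serreS_of_serreS_general (A B : Type u) [CommRing A] [CommRing B]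
    [IsNoetherianRing B] [Algebra A B] (n : ℕ)
    (M : Type u) [AddCommGroup M] [Module A M] [Module.Finite A M]
    (N : Type u) [AddCommGroup N] [Module A N] [Module B N] [IsScalarTower A B N]
    [Module.Finite B N] [Module.Flat A N]
    (hM : SerreCondS A n M)
    (hfib : ∀ P : PrimeSpectrum A, SerreCondS (fiberRing A B P) n (fiberModule A B P N)) :
    SerreCondS B n (M ⊗[A] N) := by
  intro Q hQ
  let P : PrimeSpectrum A := Q.comap (algebraMap A B)
  let R := Localization.AtPrime P.asIdeal
  let S := Localization.AtPrime Q.asIdeal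
  let N' := LocalizedModule Q.asIdeal.primeCompl N
  have : Q.asIdeal.LiesOver P.asIdeal := ⟨rfl⟩
  let : Algebra R S := Localization.AtPrime.algebraOfLiesOver P.asIdeal Q.asIdeal
  let : Module R N' := Module.compHom N' (algebraMap R S)
  have : IsScalarTower R S N' := .of_algebraMap_smul fun _ _ ↦ rfl
  have : IsScalarTower A R N' := .to₁₂₄ A R S N'
  let g : N →ₗ[B] N' := LocalizedModule.mkLinearMap Q.asIdeal.primeCompl N
  let e := localizedTensorEquiv M P.asIdeal.primeCompl Q.asIdeal.primeCompl g
  have : Nontrivial (LocalizedModule _ (M ⊗[A] N)) := Module.mem_support_iff.mp hQ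
  have : Nontrivial (N' ⊗[R] LocalizedModule P.asIdeal.primeCompl M) := e.symm.nontrivial
  exact (hM.localSerreCondS_tensorProduct g (hfib P)).congr e.symm

theorem tensor_serreS_of_serreS (A B : Type u) [CommRing A] [CommRing B] [IsNoetherianRing A] [IsNoetherianRing B]
    [Algebra A B] (n : ℕ)
    (M : Type u) [AddCommGroup M] [Module A M] [Module.Finite A M]
    (N : Type u) [AddCommGroup N] [Module A N] [Module B N] [IsScalarTower A B N]
    [Module.Finite B N] [Module.Flat A N]
    (hM : SerreCondS A n M)
    (hfib : ∀ P : PrimeSpectrum A, SerreCondS (fiberRing A B P) n (fiberModule A B P N)) :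
    SerreCondS B n (M ⊗[A] N) :=
  tensor_serreS_of_serreS_general A B n M N hM hfib

end
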